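/- Let X = {0,...,ℓ−1} be a finite alphabet and let the source produce i.i.d. digits with distribution p^so = (p^so_j) ∈ S_ℓ having all entries strictly positive; set h = −Σ_j p^so_j log p^so_j. Fix ε, η > 0 and a weight function φ : X → ℝ, and let b_n be the number of strings x ∈ X^n satisfying (1/n)·Σ_{i=0}^{n−1} φ(x_i) ≥ η and −(1/(n−1))·Σ_{i=0}^{n−2} log p^so_{x_{i+1}} ≤ h + ε. Let D = {y ∈ S_ℓ : Σ_i y_i φ(i) ≥ η and −Σ_i y_i log p^so_i ≤ h + ε}. If D has nonempty interior relative to S_ℓ, then lim_{n→∞} (1/n)·log b_n = sup{H(y) : y ∈ D}. -/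

import Mathlib

open Real Filter Finset Topology

/-!
The number of strings of length `n` with a prescribed empirical distribution `q` is at most
`exp (n * H q)`, because each of them has probability `exp (-n * H q)` under the product measure
`q ^ n`; only polynomially many distributions occur, so the growth rate is at most the supremum of
`H`. Conversely, by the weak law of large numbers, a neighbourhood of `w` carries at least half of
the mass of `w ^ n`, and a string with empirical distribution near `w` has mass about
`exp (-n * H w)`; hence at least about `exp (n * H w)` strings have empirical distribution near `w`.

The second constraint only sees the string without its first letter, which moves the empirical
distribution by at most `1 / (n + 1)`. Compactness absorbs this in the upper bound. For the lower
bound, convexity lets one move any point of the polyhedron slightly towards a relative interior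
point with positive coordinates, around which all nearby distributions satisfy both constraints.
-/

section Simplex

variable {α : Type*} [Fintype α]

/-- The Shannon entropy `H(y)` in nats, the exponential growth rate of the number of strings with
empirical distribution near `y`. Written with `negMulLog`, which is continuous at `0`. -/
noncomputable def shannonEntropy (y : α → ℝ) : ℝ := ∑ a, negMulLog (y a)

lemma shannonEntropy_eq_neg_sum (y : α → ℝ) : shannonEntropy y = -∑ a, y a * log (y a) := by
  simp only [shannonEntropy, negMulLog, neg_mul, sum_neg_distrib]

@[fun_prop]
lemma continuous_shannonEntropy : Continuous (shannonEntropy : (α → ℝ) → ℝ) := by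
  unfold shannonEntropy
  fun_prop

lemma shannonEntropy_nonneg {y : α → ℝ} (hy : y ∈ stdSimplex ℝ α) : 0 ≤ shannonEntropy y :=
  sum_nonneg fun a _ ↦
    negMulLog_nonneg (mem_Icc_of_mem_stdSimplex hy a).1 (mem_Icc_of_mem_stdSimplex hy a).2

lemma frequently_nhdsWithin_stdSimplex_pos {z : α → ℝ} (hz : z ∈ stdSimplex ℝ α) :
    ∃ᶠ q in 𝓝[stdSimplex ℝ α] z, ∀ a, 0 < q a := by
  have : Nonempty α := by
    by_contra hα
    rw [not_nonempty_iff] at hα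
    simp [stdSimplex_of_isEmpty_index] at hz
  set u : stdSimplex ℝ α := stdSimplex.barycenter
  have hu (a : α) : 0 < u.1 a := by
    rw [stdSimplex.barycenter_apply]
    positivity
  have hline : Tendsto (fun t : ℝ ↦ AffineMap.lineMap z u.1 t) (𝓝[>] 0)
      (𝓝[stdSimplex ℝ α] z) := by
    refine tendsto_nhdsWithin_iff.2 ⟨?_, ?_⟩
    · have hcont : Continuous fun t : ℝ ↦ AffineMap.lineMap z u.1 t := by fun_prop
      simpa using (hcont.tendsto 0).mono_left nhdsWithin_le_nhds
    · filter_upwards [Ioc_mem_nhdsGT one_pos] with t ht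
      exact (convex_stdSimplex ℝ α).lineMap_mem hz u.2 ⟨ht.1.le, ht.2⟩
  refine hline.frequently (Eventually.frequently ?_)
  filter_upwards [Ioc_mem_nhdsGT one_pos] with t ht a
  rw [AffineMap.lineMap_apply_module]
  simp only [Pi.add_apply, Pi.smul_apply, smul_eq_mul]
  exact add_pos_of_nonneg_of_pos (mul_nonneg (sub_nonneg.2 ht.2) (hz.1 a)) (mul_pos ht.1 (hu a))

lemma mem_nhdsWithin_stdSimplex_lineMap {D : Set (α → ℝ)} (hD : Convex ℝ D) {y z : α → ℝ}
    (hy : y ∈ stdSimplex ℝ α) (hyD : y ∈ D) (hzpos : ∀ a, 0 < z a)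
    (hzD : D ∈ 𝓝[stdSimplex ℝ α] z) {t : ℝ} (ht : t ∈ Set.Ioc 0 1) :
    D ∈ 𝓝[stdSimplex ℝ α] (AffineMap.lineMap y z t) := by
  have hdilate : Tendsto (fun q ↦ AffineMap.lineMap y q t⁻¹) (𝓝 (AffineMap.lineMap y z t))
      (𝓝 z) := by
    have hcont : Continuous fun q ↦ AffineMap.lineMap y q t⁻¹ := by fun_prop
    simpa [AffineMap.lineMap_lineMap_right, ht.1.ne'] using
      hcont.tendsto (AffineMap.lineMap y z t)
  have hmem : ∀ᶠ q in 𝓝[stdSimplex ℝ α] (AffineMap.lineMap y z t),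
      AffineMap.lineMap y q t⁻¹ ∈ stdSimplex ℝ α := by
    have hpos : ∀ᶠ v in 𝓝 z, ∀ a, 0 < v a :=
      eventually_all.2 fun a ↦ (continuous_apply a).continuousAt.eventually_const_lt (hzpos a)
    filter_upwards [nhdsWithin_le_nhds (hdilate.eventually hpos), self_mem_nhdsWithin] with q hq hqS
    refine ⟨fun a ↦ (hq a).le, ?_⟩
    simp [AffineMap.lineMap_apply_module, sum_add_distrib, ← mul_sum, hy.2, hqS.2]
  have hdilate' := tendsto_nhdsWithin_iff.2 ⟨hdilate.mono_left nhdsWithin_le_nhds, hmem⟩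
  filter_upwards [hdilate'.eventually hzD] with q hq
  have hback : AffineMap.lineMap y (AffineMap.lineMap y q t⁻¹) t = q := by
    rw [AffineMap.lineMap_lineMap_right, mul_inv_cancel₀ ht.1.ne', AffineMap.lineMap_apply_one]
  exact hback ▸ hD.lineMap_mem hyD hq ⟨ht.1.le, ht.2⟩

lemma exists_mem_nhdsWithin_stdSimplex_lt {D : Set (α → ℝ)} (hD : Convex ℝ D)
    (hint : (interior (Subtype.val ⁻¹' D : Set (stdSimplex ℝ α))).Nonempty) {f : (α → ℝ) → ℝ}
    (hf : Continuous f) {y : α → ℝ} (hy : y ∈ stdSimplex ℝ α) (hyD : y ∈ D) {b : ℝ} (hb : b < f y) :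
    ∃ w ∈ stdSimplex ℝ α, D ∈ 𝓝[stdSimplex ℝ α] w ∧ b < f w := by
  obtain ⟨z₀, hz₀⟩ := hint
  have hz₀D : D ∈ 𝓝[stdSimplex ℝ α] z₀.1 :=
    preimage_coe_mem_nhds_subtype.1 (mem_interior_iff_mem_nhds.1 hz₀)
  obtain ⟨z, hzpos, hzD, hz⟩ := ((frequently_nhdsWithin_stdSimplex_pos z₀.2).and_eventually
    ((eventually_eventually_nhdsWithin.2 hz₀D).and self_mem_nhdsWithin)).exists
  have hline : Tendsto (fun t : ℝ ↦ f (AffineMap.lineMap y z t)) (𝓝[>] 0) (𝓝 (f y)) := by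
    have hcont : Continuous fun t : ℝ ↦ f (AffineMap.lineMap y z t) := by fun_prop
    simpa using (hcont.tendsto 0).mono_left nhdsWithin_le_nhds
  obtain ⟨t, hbt, ht⟩ :=
    ((hline.eventually_const_lt hb).and (Ioc_mem_nhdsGT one_pos)).exists
  exact ⟨_, (convex_stdSimplex ℝ α).lineMap_mem hy hz ⟨ht.1.le, ht.2⟩,
    mem_nhdsWithin_stdSimplex_lineMap hD hy hyD hzpos hzD ht, hbt⟩

lemma sq_dist_le_sum_sq_sub (v w : α → ℝ) : dist v w ^ 2 ≤ ∑ a, (v a - w a) ^ 2 := by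
  refine (Real.le_sqrt dist_nonneg (sum_nonneg fun a _ ↦ sq_nonneg _)).1
    ((dist_pi_le_iff (sqrt_nonneg _)).2 fun a ↦ abs_le_sqrt ?_)
  exact single_le_sum (f := fun a ↦ (v a - w a) ^ 2) (fun a _ ↦ sq_nonneg _) (mem_univ a)

end Simplex

section ProductWeights

variable {α : Type*} [Fintype α]

lemma sum_prod_comp_eq_one (n : ℕ) {w : α → ℝ} (hw : ∑ a, w a = 1) :
    ∑ x : Fin n → α, ∏ i, w (x i) = 1 := by
  rw [← Fintype.sum_pow, hw, one_pow]

lemma sum_prod_mul_sum_sq (n : ℕ) {w f : α → ℝ} (hw : ∑ a, w a = 1) (hf : ∑ a, w a * f a = 0) :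
    ∑ x : Fin n → α, (∏ i, w (x i)) * (∑ i, f (x i)) ^ 2 = n * ∑ a, w a * f a ^ 2 := by
  induction n with
  | zero => simp
  | succ n ih =>
    have expand (a : α) (y : Fin n → α) :
        (∏ i, w ((Fin.cons a y : Fin (n + 1) → α) i)) *
            (∑ i, f ((Fin.cons a y : Fin (n + 1) → α) i)) ^ 2 =
          w a * f a ^ 2 * ∏ i, w (y i) + w a * f a * (2 * ((∏ i, w (y i)) * ∑ i, f (y i))) +
            w a * ((∏ i, w (y i)) * (∑ i, f (y i)) ^ 2) := by
      simp only [Fin.prod_univ_succ, Fin.sum_univ_succ, Fin.cons_zero, Fin.cons_succ]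
      ring
    rw [← (Fin.consEquiv fun _ ↦ α).sum_comp, Fintype.sum_prod_type]
    simp only [Fin.consEquiv_apply, expand, sum_add_distrib, ← mul_sum, ← sum_mul, ih, hw, hf,
      sum_prod_comp_eq_one n hw]
    push_cast
    ring

end ProductWeights

section Empirical

variable {α : Type*} [DecidableEq α] {n : ℕ}

/-- The empirical distribution (type) of a string `x`: the frequency of each letter in `x`. The
constraints on strings are constraints on this vector. For the empty string it is `0`, which is not
a probability vector. -/
noncomputable def empirical (x : Fin n → α) (a : α) : ℝ := #{i | x i = a} / n

lemma natCast_mul_empirical (x : Fin n → α) (a : α) : n * empirical x a = #{i | x i = a} := by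
  rcases eq_or_ne n 0 with rfl | hn
  · simp
  · exact mul_div_cancel₀ _ (mod_cast hn)

lemma empirical_nonneg (x : Fin n → α) (a : α) : 0 ≤ empirical x a := by
  unfold empirical
  positivity

lemma empirical_le_one (x : Fin n → α) (a : α) : empirical x a ≤ 1 :=
  div_le_one_of_le₀ (mod_cast (card_le_univ _).trans_eq (Fintype.card_fin n)) n.cast_nonneg

lemma empirical_apply_pos (x : Fin n → α) (i : Fin n) : 0 < empirical x (x i) := by
  have : 0 < #{j | x j = x i} := card_pos.2 ⟨i, by simp⟩
  have : 0 < n := i.pos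
  unfold empirical
  positivity

variable [Fintype α]

lemma sum_empirical_mul (x : Fin n → α) (f : α → ℝ) :
    ∑ a, empirical x a * f a = (n : ℝ)⁻¹ * ∑ i, f (x i) := by
  rw [← sum_fiberwise univ x (fun i ↦ f (x i)), mul_sum]
  refine sum_congr rfl fun a _ ↦ ?_
  rw [sum_congr rfl fun i hi ↦ congrArg f (mem_filter.1 hi).2, sum_const, nsmul_eq_mul, empirical]
  ring

lemma empirical_mem_stdSimplex (hn : n ≠ 0) (x : Fin n → α) : empirical x ∈ stdSimplex ℝ α := by
  refine ⟨empirical_nonneg x, ?_⟩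
  simpa [hn] using sum_empirical_mul x 1

lemma dist_empirical_tail_le (x : Fin (n + 1) → α) :
    dist (empirical x) (empirical (Fin.tail x)) ≤ 1 / ((n : ℝ) + 1) := by
  refine (dist_pi_le_iff (by positivity)).2 fun a ↦ ?_
  have hcount :
      (#{i | x i = a} : ℝ) = (if x 0 = a then 1 else 0) + n * empirical (Fin.tail x) a := by
    rw [natCast_mul_empirical, Fin.card_filter_univ_succ']
    push_cast
    rfl
  have hdiff : empirical x a - empirical (Fin.tail x) a =
      ((if x 0 = a then 1 else 0) - empirical (Fin.tail x) a) / ((n : ℝ) + 1) := by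
    rw [empirical, hcount]
    push_cast
    field
  have h0 := empirical_nonneg (Fin.tail x) a
  have h1 := empirical_le_one (Fin.tail x) a
  rw [Real.dist_eq, hdiff, abs_div, abs_of_pos (by positivity : (0 : ℝ) < n + 1)]
  gcongr
  split_ifs <;> exact abs_le.2 ⟨by linarith, by linarith⟩

lemma prod_comp_eq_exp_empirical {w : α → ℝ} {x : Fin n → α} (hw : ∀ i, 0 < w (x i)) :
    ∏ i, w (x i) = exp (n * ∑ a, empirical x a * log (w a)) := by
  rcases eq_or_ne n 0 with rfl | hn
  · simp
  rw [sum_empirical_mul, mul_inv_cancel_left₀ (mod_cast hn), exp_sum]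
  exact prod_congr rfl fun i _ ↦ (exp_log (hw i)).symm

lemma prod_comp_le_exp_empirical {w : α → ℝ} (hw : ∀ a, 0 ≤ w a) (x : Fin n → α) :
    ∏ i, w (x i) ≤ exp (n * ∑ a, empirical x a * log (w a)) := by
  by_cases hx : ∀ i, 0 < w (x i)
  · exact (prod_comp_eq_exp_empirical hx).le
  · push Not at hx
    obtain ⟨i, hi⟩ := hx
    rw [prod_eq_zero (mem_univ i) (hi.antisymm (hw _))]
    positivity

end Empirical

section UpperBound

variable {α : Type*} [Fintype α] [DecidableEq α] {n : ℕ}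

lemma card_empirical_eq_le (x : Fin n → α) :
    (#{y : Fin n → α | empirical y = empirical x} : ℝ) ≤
      exp (n * shannonEntropy (empirical x)) := by
  rcases eq_or_ne n 0 with rfl | hn
  · simpa using card_le_univ {y : Fin 0 → α | empirical y = empirical x}
  set w := empirical x
  have hw := empirical_mem_stdSimplex hn x
  have hprod (y : Fin n → α) (hy : empirical y = w) :
      ∏ i, w (y i) = exp (-(n * shannonEntropy w)) := by
    rw [prod_comp_eq_exp_empirical fun i ↦ hy ▸ empirical_apply_pos y i, hy,
      shannonEntropy_eq_neg_sum, mul_neg, neg_neg]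
  have : #{y : Fin n → α | empirical y = w} * exp (-(n * shannonEntropy w)) ≤ 1 :=
    calc #{y : Fin n → α | empirical y = w} * exp (-(n * shannonEntropy w))
        = ∑ y : Fin n → α with empirical y = w, ∏ i, w (y i) := by
          rw [sum_congr rfl fun y hy ↦ hprod y (mem_filter.1 hy).2, sum_const, nsmul_eq_mul]
      _ ≤ ∑ y : Fin n → α, ∏ i, w (y i) :=
          sum_le_univ_sum_of_nonneg fun y ↦ prod_nonneg fun i _ ↦ hw.1 _
      _ = 1 := sum_prod_comp_eq_one n hw.2
  rwa [exp_neg, ← div_eq_mul_inv, div_le_one (exp_pos _)] at this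

lemma card_image_empirical_le (s : Finset (Fin n → α)) :
    #(s.image empirical) ≤ (n + 1) ^ Fintype.card α := by
  have hsub : s.image empirical ⊆
      (Fintype.piFinset fun _ : α ↦ range (n + 1)).image fun k a ↦ (k a : ℝ) / n := by
    refine image_subset_iff.2 fun x _ ↦ mem_image.2 ⟨fun a ↦ #{i | x i = a}, ?_, rfl⟩
    refine Fintype.mem_piFinset.2 fun a ↦ mem_range_succ_iff.2 ?_
    exact (card_le_univ _).trans_eq (Fintype.card_fin n)
  calc #(s.image empirical) ≤ #(Fintype.piFinset fun _ : α ↦ range (n + 1)) :=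
        (card_le_card hsub).trans card_image_le
    _ = (n + 1) ^ Fintype.card α := by simp

lemma card_le_of_shannonEntropy_empirical_le {s : Finset (Fin n → α)} {b : ℝ}
    (hs : ∀ x ∈ s, shannonEntropy (empirical x) ≤ b) :
    (#s : ℝ) ≤ ((n : ℝ) + 1) ^ Fintype.card α * exp (n * b) := by
  have hfiber : ∀ v ∈ s.image empirical, (#{y ∈ s | empirical y = v} : ℝ) ≤ exp (n * b) := by
    simp only [mem_image, forall_exists_index, and_imp, forall_apply_eq_imp_iff₂]
    intro x hx
    calc (#{y ∈ s | empirical y = empirical x} : ℝ)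
        ≤ #{y : Fin n → α | empirical y = empirical x} := by gcongr; exact subset_univ s
      _ ≤ exp (n * shannonEntropy (empirical x)) := card_empirical_eq_le x
      _ ≤ exp (n * b) := by gcongr; exact hs x hx
  calc (#s : ℝ) = ∑ v ∈ s.image empirical, (#{y ∈ s | empirical y = v} : ℝ) :=
        mod_cast card_eq_sum_card_image empirical s
    _ ≤ #(s.image empirical) * exp (n * b) := by
        simpa only [nsmul_eq_mul] using sum_le_card_nsmul _ _ _ hfiber
    _ ≤ ((n : ℝ) + 1) ^ Fintype.card α * exp (n * b) := by
        gcongr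
        exact_mod_cast card_image_empirical_le s

lemma inv_mul_log_ncard_le (hn : n ≠ 0) {s : Set (Fin n → α)} {b : ℝ} (hb : 0 ≤ b)
    (hs : ∀ x ∈ s, shannonEntropy (empirical x) ≤ b) :
    (n : ℝ)⁻¹ * log s.ncard ≤ Fintype.card α * (log ((n : ℝ) + 1) / n) + b := by
  classical
  have hcard := card_le_of_shannonEntropy_empirical_le (s := s.toFinset)
    fun x hx ↦ hs x (Set.mem_toFinset.1 hx)
  rw [← Set.ncard_eq_toFinset_card'] at hcard
  have hlog : log s.ncard ≤ Fintype.card α * log ((n : ℝ) + 1) + n * b := by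
    rcases s.ncard.eq_zero_or_pos with h0 | hpos
    · have := log_nonneg (by simp : (1 : ℝ) ≤ n + 1)
      simp only [h0, Nat.cast_zero, log_zero]
      positivity
    · calc log s.ncard ≤ log (((n : ℝ) + 1) ^ Fintype.card α * exp (n * b)) :=
            log_le_log (mod_cast hpos) hcard
        _ = _ := by rw [log_mul (by positivity) (by positivity), log_pow, log_exp]
  rw [inv_mul_le_iff₀ (by positivity)]
  refine hlog.trans_eq ?_
  field

lemma tendsto_log_natCast_add_one_div_natCast :
    Tendsto (fun n : ℕ ↦ log ((n : ℝ) + 1) / n) atTop (𝓝 0) := by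
  have hsub := tendsto_log_nat_add_one_sub_log.div_atTop tendsto_natCast_atTop_atTop
  have hlog := isLittleO_log_id_atTop.tendsto_div_nhds_zero.comp
    (tendsto_natCast_atTop_atTop (R := ℝ))
  refine (zero_add (0 : ℝ) ▸ hsub.add hlog).congr fun n ↦ ?_
  simp only [Function.comp_apply, id_eq]
  ring

lemma eventually_shannonEntropy_empirical_lt {A B : Set (α → ℝ)} (hA : IsClosed A)
    (hB : IsClosed B) {b : ℝ} (hb : ∀ y ∈ stdSimplex ℝ α ∩ (A ∩ B), shannonEntropy y < b) :
    ∀ᶠ n : ℕ in atTop, ∀ x : Fin (n + 1) → α, empirical x ∈ A → empirical (Fin.tail x) ∈ B →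
      shannonEntropy (empirical x) < b := by
  have hcompact : IsCompact (stdSimplex ℝ α ∩ (A ∩ {y | b ≤ shannonEntropy y})) :=
    (isCompact_stdSimplex ℝ α).inter_right
      (hA.inter (isClosed_le continuous_const continuous_shannonEntropy))
  have hdisj : Disjoint (stdSimplex ℝ α ∩ (A ∩ {y | b ≤ shannonEntropy y})) B :=
    Set.disjoint_left.2 fun y ⟨hy, hyA, hby⟩ hyB ↦ (hb y ⟨hy, hyA, hyB⟩).not_ge hby
  obtain ⟨δ, hδ, hthick⟩ := hdisj.exists_thickenings hcompact hB
  filter_upwards [tendsto_one_div_add_atTop_nhds_zero_nat (𝕜 := ℝ) |>.eventually_lt_const hδ]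
    with n hnδ x hxA hxB
  by_contra! hbx
  refine Set.disjoint_left.1 hthick (Metric.mem_thickening_iff.2 ⟨empirical x,
    ⟨empirical_mem_stdSimplex n.succ_ne_zero x, hxA, hbx⟩, ?_⟩)
    (Metric.self_subset_thickening hδ B hxB)
  rw [dist_comm]
  exact (dist_empirical_tail_le x).trans_lt hnδ

lemma eventually_inv_mul_log_ncard_empirical_tail_mem_lt {A B : Set (α → ℝ)} (hA : IsClosed A)
    (hB : IsClosed B) {b c : ℝ} (hb0 : 0 ≤ b) (hbc : b < c)
    (hb : ∀ y ∈ stdSimplex ℝ α ∩ (A ∩ B), shannonEntropy y < b) :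
    ∀ᶠ n : ℕ in atTop, ((n : ℝ) + 1)⁻¹ *
      log {x : Fin (n + 1) → α | empirical x ∈ A ∧ empirical (Fin.tail x) ∈ B}.ncard < c := by
  have herror : Tendsto (fun n : ℕ ↦ Fintype.card α * (log ((n : ℝ) + 1) / n) + b)
      atTop (𝓝 b) := by
    simpa using (tendsto_log_natCast_add_one_div_natCast.const_mul (Fintype.card α : ℝ)).add_const b
  filter_upwards [eventually_shannonEntropy_empirical_lt hA hB hb,
    (tendsto_add_atTop_nat 1).eventually (herror.eventually_lt_const hbc)] with n hn hnc
  refine lt_of_le_of_lt ?_ hnc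
  have hbound := inv_mul_log_ncard_le n.succ_ne_zero hb0
    (s := {x | empirical x ∈ A ∧ empirical (Fin.tail x) ∈ B}) fun x hx ↦ (hn x hx.1 hx.2).le
  exact_mod_cast hbound

end UpperBound

section LowerBound

variable {α : Type*} [Fintype α] [DecidableEq α] {n : ℕ}

lemma sum_prod_mul_empirical_sub_sq (hn : n ≠ 0) {w : α → ℝ} (hw : ∑ a, w a = 1) (a : α) :
    ∑ x : Fin n → α, (∏ i, w (x i)) * (empirical x a - w a) ^ 2 = w a * (1 - w a) / n := by
  set f : α → ℝ := fun b ↦ (if b = a then 1 else 0) - w a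
  have hmean : ∑ b, w b * f b = 0 := by simp [f, mul_sub, ← sum_mul, hw]
  have hvar : ∑ b, w b * f b ^ 2 = w a * (1 - w a) := by
    have hsq (b : α) :
        w b * f b ^ 2 = (1 - w a) * (if b = a then w b else 0) - w a * (w b * f b) := by
      simp only [f]
      split_ifs <;> ring
    simp only [hsq, sum_sub_distrib, ← mul_sum, hmean, sum_ite_eq', mem_univ, if_true]
    ring
  have hdev (x : Fin n → α) : empirical x a - w a = (n : ℝ)⁻¹ * ∑ i, f (x i) := by
    rw [← sum_empirical_mul]
    simp [f, mul_sub, ← sum_mul, (empirical_mem_stdSimplex hn x).2]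
  simp only [hdev, mul_pow, mul_left_comm _ ((n : ℝ)⁻¹ ^ 2), ← mul_sum,
    sum_prod_mul_sum_sq n hw hmean, hvar]
  field

lemma one_sub_le_sum_prod_of_dist_empirical_lt (hn : n ≠ 0) {w : α → ℝ}
    (hw : w ∈ stdSimplex ℝ α) {δ : ℝ} (hδ : 0 < δ) :
    1 - 1 / (n * δ ^ 2) ≤ ∑ x : Fin n → α with dist (empirical x) w < δ, ∏ i, w (x i) := by
  have hnonneg (x : Fin n → α) : 0 ≤ ∏ i, w (x i) := prod_nonneg fun i _ ↦ hw.1 _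
  have hmoment : ∑ x : Fin n → α, (∏ i, w (x i)) * dist (empirical x) w ^ 2 ≤ 1 / n :=
    calc ∑ x : Fin n → α, (∏ i, w (x i)) * dist (empirical x) w ^ 2
        ≤ ∑ x : Fin n → α, (∏ i, w (x i)) * ∑ a, (empirical x a - w a) ^ 2 := by
          gcongr with x
          · exact hnonneg x
          · exact sq_dist_le_sum_sq_sub _ _
      _ = ∑ a, w a * (1 - w a) / n := by
          simp only [mul_sum]
          rw [sum_comm]
          exact sum_congr rfl fun a _ ↦ sum_prod_mul_empirical_sub_sq hn hw.2 a
      _ ≤ ∑ a, w a / n := by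
          gcongr with a
          nlinarith [hw.1 a]
      _ = 1 / n := by rw [← sum_div, hw.2]
  have hfar : (∑ x : Fin n → α with ¬dist (empirical x) w < δ, ∏ i, w (x i)) * δ ^ 2 ≤ 1 / n := by
    rw [sum_mul]
    refine le_trans ?_ hmoment
    calc _ ≤ ∑ x : Fin n → α with ¬dist (empirical x) w < δ,
          (∏ i, w (x i)) * dist (empirical x) w ^ 2 := by
          gcongr with x hx
          · exact hnonneg x
          · exact not_lt.1 (mem_filter.1 hx).2
      _ ≤ _ := sum_le_univ_sum_of_nonneg fun x ↦ mul_nonneg (hnonneg x) (sq_nonneg _)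
  rw [← le_div_iff₀ (by positivity), div_div] at hfar
  have hsplit := sum_filter_add_sum_filter_not univ
    (fun x : Fin n → α ↦ dist (empirical x) w < δ) (fun x ↦ ∏ i, w (x i))
  rw [sum_prod_comp_eq_one n hw.2] at hsplit
  linarith

lemma sum_prod_le_card_mul_exp {s : Finset (Fin n → α)} {w : α → ℝ} (hw : ∀ a, 0 ≤ w a) {b : ℝ}
    (hs : ∀ x ∈ s, b ≤ -∑ a, empirical x a * log (w a)) :
    ∑ x ∈ s, ∏ i, w (x i) ≤ #s * exp (-(n * b)) := by
  rw [← nsmul_eq_mul]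
  refine sum_le_card_nsmul _ _ _ fun x hx ↦ (prod_comp_le_exp_empirical hw x).trans ?_
  rw [← mul_neg]
  gcongr
  exact le_neg_of_le_neg (hs x hx)

lemma half_mul_exp_le_ncard_empirical_mem (hn : n ≠ 0) {w : α → ℝ} (hw : w ∈ stdSimplex ℝ α)
    {δ : ℝ} (hδ : 0 < δ) (hnδ : 2 ≤ n * δ ^ 2) {U : Set (α → ℝ)} {b : ℝ}
    (hU : ∀ v ∈ stdSimplex ℝ α, dist v w < δ → v ∈ U ∧ b ≤ -∑ a, v a * log (w a)) :
    exp (n * b) / 2 ≤ {x : Fin n → α | empirical x ∈ U}.ncard := by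
  set s : Finset (Fin n → α) := {x | dist (empirical x) w < δ}
  have hs (x) (hx : x ∈ s) := hU _ (empirical_mem_stdSimplex hn x) (mem_filter.1 hx).2
  have hhalf : 1 / ((n : ℝ) * δ ^ 2) ≤ 1 / 2 := by gcongr
  have hmass := (one_sub_le_sum_prod_of_dist_empirical_lt hn hw hδ).trans
    (sum_prod_le_card_mul_exp hw.1 fun x hx ↦ (hs x hx).2)
  rw [exp_neg, ← div_eq_mul_inv, le_div_iff₀ (exp_pos _)] at hmass
  have hsub : (#s : ℝ) ≤ {x : Fin n → α | empirical x ∈ U}.ncard := by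
    rw [← Set.ncard_coe_finset]
    exact_mod_cast Set.ncard_le_ncard fun x hx ↦ (hs x hx).1
  calc exp (n * b) / 2 = (1 - 1 / 2) * exp (n * b) := by ring
    _ ≤ (1 - 1 / (n * δ ^ 2)) * exp (n * b) := by gcongr
    _ ≤ _ := hmass.trans hsub

theorem eventually_lt_inv_mul_log_ncard_empirical_mem {w : α → ℝ} (hw : w ∈ stdSimplex ℝ α)
    {U : Set (α → ℝ)} (hU : U ∈ 𝓝[stdSimplex ℝ α] w) {b : ℝ} (hb : b < shannonEntropy w) :
    ∀ᶠ n : ℕ in atTop, b < (n : ℝ)⁻¹ * log {x : Fin n → α | empirical x ∈ U}.ncard := by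
  obtain ⟨b', hbb', hb'⟩ := exists_between hb
  have hcross : ∀ᶠ v in 𝓝[stdSimplex ℝ α] w, v ∈ U ∧ b' ≤ -∑ a, v a * log (w a) := by
    have hcont : Continuous fun v : α → ℝ ↦ -∑ a, v a * log (w a) := by fun_prop
    rw [shannonEntropy_eq_neg_sum] at hb'
    filter_upwards [hU, nhdsWithin_le_nhds (hcont.continuousAt.eventually_const_lt hb')] with v hv h
    exact ⟨hv, h.le⟩
  obtain ⟨δ, hδ, hball⟩ := Metric.mem_nhdsWithin_iff.1 hcross
  have hlog2 : Tendsto (fun n : ℕ ↦ b' - log 2 / n) atTop (𝓝 b') := by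
    simpa using (tendsto_const_div_atTop_nhds_zero_nat (log 2)).const_sub b'
  have hlarge := (tendsto_natCast_atTop_atTop (R := ℝ)).atTop_mul_const (pow_pos hδ 2)
  filter_upwards [hlog2.eventually_const_lt hbb', hlarge.eventually_ge_atTop 2,
    eventually_ne_atTop 0] with n hn hnδ hn0
  refine hn.trans_le ?_
  have hcount := half_mul_exp_le_ncard_empirical_mem hn0 hw hδ hnδ fun v hv hd ↦ hball ⟨hd, hv⟩
  rw [le_inv_mul_iff₀ (by positivity)]
  calc n * (b' - log 2 / n) = log (exp (n * b') / 2) := by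
        rw [log_div (by positivity) (by positivity), log_exp]
        field
    _ ≤ _ := log_le_log (by positivity) hcount

lemma log_ncard_le_log_ncard {β : Type*} [Finite β] {s t : Set β} (h : s ⊆ t) :
    log s.ncard ≤ log t.ncard := by
  rcases s.ncard.eq_zero_or_pos with h0 | hpos
  · simpa [h0] using log_natCast_nonneg t.ncard
  · exact log_le_log (mod_cast hpos) (mod_cast Set.ncard_le_ncard h)

theorem eventually_lt_inv_mul_log_ncard_empirical_tail_mem {A B : Set (α → ℝ)} {w : α → ℝ}
    (hw : w ∈ stdSimplex ℝ α) (hAB : A ∩ B ∈ 𝓝[stdSimplex ℝ α] w) {b : ℝ}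
    (hb : b < shannonEntropy w) :
    ∀ᶠ n : ℕ in atTop, b < ((n : ℝ) + 1)⁻¹ *
      log {x : Fin (n + 1) → α | empirical x ∈ A ∧ empirical (Fin.tail x) ∈ B}.ncard := by
  obtain ⟨δ, hδ, hball⟩ := Metric.mem_nhdsWithin_iff.1 hAB
  have hU : Metric.ball w (δ / 2) ∈ 𝓝[stdSimplex ℝ α] w :=
    nhdsWithin_le_nhds (Metric.ball_mem_nhds w (half_pos hδ))
  have hcount := (tendsto_add_atTop_nat 1).eventually
    (eventually_lt_inv_mul_log_ncard_empirical_mem hw hU hb)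
  filter_upwards [hcount, eventually_ne_atTop 0, tendsto_one_div_add_atTop_nhds_zero_nat (𝕜 := ℝ)
    |>.eventually_lt_const (half_pos hδ)] with n hn hn0 hnδ
  push_cast at hn
  refine hn.trans_le (mul_le_mul_of_nonneg_left (log_ncard_le_log_ncard fun x hx ↦ ?_)
    (by positivity))
  have hx : dist (empirical x) w < δ / 2 := hx
  have htail : dist (empirical (Fin.tail x)) w < δ := by
    linarith [dist_triangle_left (empirical (Fin.tail x)) w (empirical x), dist_empirical_tail_le x]
  exact ⟨(hball ⟨hx.trans (half_lt_self hδ), empirical_mem_stdSimplex n.succ_ne_zero x⟩).1,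
    (hball ⟨htail, empirical_mem_stdSimplex hn0 _⟩).2⟩

end LowerBound

theorem tendsto_inv_mul_log_ncard_empirical_tail_mem
    {α : Type*} [Fintype α] [DecidableEq α] {A B : Set (α → ℝ)} (hA : IsClosed A)
    (hB : IsClosed B) (hAB : Convex ℝ (A ∩ B))
    (hint : (interior (Subtype.val ⁻¹' (A ∩ B) : Set (stdSimplex ℝ α))).Nonempty) :
    Tendsto (fun n : ℕ ↦ ((n : ℝ) + 1)⁻¹ *
        log {x : Fin (n + 1) → α | empirical x ∈ A ∧ empirical (Fin.tail x) ∈ B}.ncard)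
      atTop (𝓝 (sSup (shannonEntropy '' (stdSimplex ℝ α ∩ (A ∩ B))))) := by
  set D := stdSimplex ℝ α ∩ (A ∩ B)
  obtain ⟨⟨z, hzS⟩, hz⟩ := hint.mono interior_subset
  have hzD : z ∈ D := ⟨hzS, hz⟩
  have hbdd : BddAbove (shannonEntropy '' D) :=
    ((isCompact_stdSimplex ℝ α).inter_right (hA.inter hB)).bddAbove_image
      continuous_shannonEntropy.continuousOn
  have hle (y) (hy : y ∈ D) : shannonEntropy y ≤ sSup (shannonEntropy '' D) :=
    le_csSup hbdd (Set.mem_image_of_mem _ hy)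
  refine tendsto_order.2 ⟨fun b hb ↦ ?_, fun c hc ↦ ?_⟩
  · obtain ⟨_, ⟨y, ⟨hy, hyAB⟩, rfl⟩, hby⟩ :=
      exists_lt_of_lt_csSup ⟨_, Set.mem_image_of_mem _ hzD⟩ hb
    obtain ⟨w, hw, hwAB, hbw⟩ :=
      exists_mem_nhdsWithin_stdSimplex_lt hAB hint continuous_shannonEntropy hy hyAB hby
    exact eventually_lt_inv_mul_log_ncard_empirical_tail_mem hw hwAB hbw
  · obtain ⟨b, hb, hbc⟩ := exists_between hc
    have hb0 : 0 ≤ b := (shannonEntropy_nonneg hzS).trans ((hle z hzD).trans hb.le)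
    exact eventually_inv_mul_log_ncard_empirical_tail_mem_lt hA hB hb0 hbc
      fun y hy ↦ (hle y hy).trans_lt hb

theorem stmt2_general {α : Type*} [Fintype α] (φ c : α → ℝ) (η b : ℝ)
    (hint : (interior {y : stdSimplex ℝ α |
      η ≤ ∑ a, y.1 a * φ a ∧ ∑ a, y.1 a * c a ≤ b}).Nonempty) :
    Tendsto (fun n : ℕ ↦ ((n : ℝ) + 1)⁻¹ * log {x : Fin (n + 1) → α |
        η ≤ ((n : ℝ) + 1)⁻¹ * ∑ i, φ (x i) ∧
          (n : ℝ)⁻¹ * ∑ i : Fin n, c (x i.succ) ≤ b}.ncard)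
      atTop (𝓝 (sSup (shannonEntropy ''
        {y ∈ stdSimplex ℝ α | η ≤ ∑ a, y a * φ a ∧ ∑ a, y a * c a ≤ b}))) := by
  classical
  have hA : IsClosed {y : α → ℝ | η ≤ ∑ a, y a * φ a} := isClosed_le (by fun_prop) (by fun_prop)
  have hB : IsClosed {y : α → ℝ | ∑ a, y a * c a ≤ b} := isClosed_le (by fun_prop) (by fun_prop)
  have hlin (f : α → ℝ) : IsLinearMap ℝ fun y : α → ℝ ↦ ∑ a, y a * f a :=
    (Fintype.linearCombination ℝ f).isLinear
  have hAB := (convex_halfSpace_ge (hlin φ) η).inter (convex_halfSpace_le (hlin c) b)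
  have h := tendsto_inv_mul_log_ncard_empirical_tail_mem hA hB hAB hint
  simp only [Set.mem_ofPred_eq, sum_empirical_mul, Nat.cast_succ] at h
  exact h

/-- For an IID source with strictly positive one-digit distribution
`p`, the number `bn n` of selected strings of length `n+1` grows exponentially with
rate `sup {H(y) : y ∈ D}`, provided the polyhedron `D` has nonempty interior relative
to the simplex `S_ℓ`. -/
theorem stmt2
    (ℓ : ℕ) (hℓ : 0 < ℓ)
    -- IID source distribution, strictly positive
    (p : Fin ℓ → ℝ)
    (hpPos : ∀ j, 0 < p j)
    (hpSum : ∑ j, p j = 1)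
    -- entropy rate of the source
    (h : ℝ)
    (hdef : h = -∑ j, p j * Real.log (p j))
    (ε η : ℝ) (hε : 0 < ε) (hη : 0 < η)
    -- one-digit weight function
    (φ : Fin ℓ → ℝ)
    -- the number of selected strings of length n+1
    (bn : ℕ → ℕ)
    (hbn : ∀ n, bn n = Set.ncard {x : Fin (n+1) → Fin ℓ |
        η ≤ ((n : ℝ)+1)⁻¹ * ∑ i, φ (x i) ∧
        -(n : ℝ)⁻¹ * ∑ l : Fin n, Real.log (p (x l.succ)) ≤ h + ε})
    -- the simplex S_ℓ
    (S1 : Set (Fin ℓ → ℝ))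
    (hS1 : S1 = {y | (∀ i, 0 ≤ y i) ∧ ∑ i, y i = 1})
    -- the polyhedron D ⊆ S_ℓ
    (D : Set (Fin ℓ → ℝ))
    (hD : D = {y ∈ S1 | η ≤ ∑ i, y i * φ i ∧ -∑ i, y i * Real.log (p i) ≤ h + ε})
    -- D has nonempty interior relative to S_ℓ
    (hInt : (interior {y : ↥S1 | (y : Fin ℓ → ℝ) ∈ D}).Nonempty)
    -- the entropy function H
    (H : (Fin ℓ → ℝ) → ℝ)
    (hH : ∀ y, H y = -∑ i, y i * Real.log (y i)) :
    Tendsto (fun n : ℕ => ((n : ℝ)+1)⁻¹ * Real.log (bn n))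
      atTop (𝓝 (sSup {r | ∃ y ∈ D, r = H y})) := by
  obtain rfl : S1 = stdSimplex ℝ (Fin ℓ) := hS1
  have hlimit := stmt2_general φ (fun i ↦ -log (p i)) η (h + ε) (by simpa [hD] using hInt)
  simpa [hbn, hD, hH, Set.image, shannonEntropy_eq_neg_sum, eq_comm] using hlimit
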